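/- There exists a constant C > 0 such that for every T with 0 ≤ T ≤ 1 and every admissible source g on [0,T]×ℝ², the Duhamel term D(t) = ∫₀^t U(t−τ) g(τ) dτ satisfies sup_{x₁ ∈ ℝ} (∫_ℝ ∫₀^T |∂_{x₁}D(t)(x₁,x₂)|² dt dx₂)^{1/2} ≤ C ∫₀^T ‖g(τ)‖_{L²(ℝ²)} dτ. -/

import Mathlib

/-!
By Minkowski's inequality in `τ` (`lintegral_L2_minkowski`) the estimate reduces to local smoothing
for the linear group, `‖∂_{x₁} U(t-τ)φ (x₁, ·)‖_{L²_{x₂,t}} ≤ C ‖φ‖_{L²}` uniformly in `x₁`, with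
`t` ranging over all of `ℝ`. At fixed `x₁`, the function `∂_{x₁} U(t-τ)φ (x₁, x₂)` is an oscillatory
integral `∫ e^{i(x₂·2πξ₂ + t P(ξ))} f(ξ) dξ` with `P(ξ) = ξ₁(ξ₁²+ξ₂²)` and
`|f(ξ)| = 2π|ξ₁||Fφ(ξ)|`. The change of variables `ξ₁ ↦ P(ξ₁, ξ₂)` has Jacobian `3ξ₁² + ξ₂²`, and
formally Plancherel in `(x₂, t)` gives `∫ |f|² / (3ξ₁² + ξ₂²) ≲ ∫ |Fφ|²`.

The change of variables and Plancherel are carried out together, without inverting `P` or dividing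
by the Jacobian: insert the weight `e^{-ε(x₂² + t²)}`, expand the square, integrate in `(x₂, t)`
to obtain a positive Gaussian kernel in the phase differences (`osc_gauss`), apply Schur's test
(`osc_gauss_le`), and let `ε → 0` (`osc_L2_le`). The same bound with linear phases yields
`∫ |Fφ|² ≤ ∫ |φ|²` for the transform `FT` (`lintegral_FT_le`).

Differentiation under the integral sign (`hasDerivAt_duh`) rests on uniform decay of `F(g(τ))` for
`τ ∈ [0,T]` (`family_bound`), which follows from the continuity of `g` into the Schwartz space.
-/

open MeasureTheory
open scoped ENNReal NNReal

noncomputable section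

/-- Fourier transform on ℝ² (realized as ℝ × ℝ). -/
def FT (f : ℝ × ℝ → ℂ) : ℝ × ℝ → ℂ := fun ξ =>
  ∫ x : ℝ × ℝ,
    Complex.exp (((-(2 * Real.pi * (x.1 * ξ.1 + x.2 * ξ.2)) : ℝ) : ℂ) * Complex.I) * f x

/-- Inverse Fourier transform on ℝ². -/
def FTinv (f : ℝ × ℝ → ℂ) : ℝ × ℝ → ℂ := fun x =>
  ∫ ξ : ℝ × ℝ,
    Complex.exp ((((2 * Real.pi * (x.1 * ξ.1 + x.2 * ξ.2)) : ℝ) : ℂ) * Complex.I) * f ξ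

/-- The linear Zakharov–Kuznetsov group `U(t)φ = F⁻¹(e^{i t ξ₁(ξ₁²+ξ₂²)} Fφ)`. -/
def U (t : ℝ) (φ : ℝ × ℝ → ℂ) : ℝ × ℝ → ℂ :=
  FTinv (fun ξ => Complex.exp (Complex.I * ((t * ξ.1 * (ξ.1 ^ 2 + ξ.2 ^ 2) : ℝ) : ℂ)) * FT φ ξ)

/-- Fractional derivative in the first variable: `D^r_{x₁} f = F⁻¹(|ξ₁|^r F f)`. -/
def Dx1 (r : ℝ) (f : ℝ × ℝ → ℂ) : ℝ × ℝ → ℂ :=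
  FTinv (fun ξ => ((|ξ.1| ^ r : ℝ) : ℂ) * FT f ξ)

/-- Fractional derivative in the second variable: `D^r_{x₂} f = F⁻¹(|ξ₂|^r F f)`. -/
def Dx2 (r : ℝ) (f : ℝ × ℝ → ℂ) : ℝ × ℝ → ℂ :=
  FTinv (fun ξ => ((|ξ.2| ^ r : ℝ) : ℂ) * FT f ξ)

/-- Partial derivative ∂_{x₁}. -/
def pd1 (f : ℝ × ℝ → ℂ) : ℝ × ℝ → ℂ := fun x => fderiv ℝ f x (1, 0)

/-- Partial derivative ∂_{x₂}. -/
def pd2 (f : ℝ × ℝ → ℂ) : ℝ × ℝ → ℂ := fun x => fderiv ℝ f x (0, 1)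

/-- Duhamel integral `∫₀^t U(t-τ) g(τ) dτ`. -/
def Duh (g : ℝ → ℝ × ℝ → ℂ) (t : ℝ) : ℝ × ℝ → ℂ := fun x =>
  ∫ τ in (0:ℝ)..t, U (t - τ) (g τ) x

/-- Sobolev norm `‖f‖_{H^s(ℝ²)}`. -/
def HsNorm (s : ℝ) (f : ℝ × ℝ → ℂ) : ℝ≥0∞ :=
  (∫⁻ ξ : ℝ × ℝ,
      ENNReal.ofReal ((1 + ξ.1 ^ 2 + ξ.2 ^ 2) ^ s) * (‖FT f ξ‖₊ : ℝ≥0∞) ^ (2 : ℝ)) ^ ((1:ℝ)/2)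

/-- The mixed norm `‖f‖_{L^{9/4}_T L^∞_x}`. -/
def L94LinfNorm (T : ℝ) (f : ℝ → ℝ × ℝ → ℂ) : ℝ≥0∞ :=
  (∫⁻ t in Set.Icc (0:ℝ) T, (eLpNorm (f t) ⊤ volume) ^ ((9:ℝ)/4)) ^ ((4:ℝ)/9)

/-- The mixed norm `‖f‖_{L²_{x₁} L^∞_{x₂ T}}` (with genuine suprema). -/
def L2x1LinfNorm (T : ℝ) (f : ℝ → ℝ × ℝ → ℂ) : ℝ≥0∞ :=
  (∫⁻ x₁ : ℝ,
      (⨆ x₂ : ℝ, ⨆ t ∈ Set.Icc (0:ℝ) T, (‖f t (x₁, x₂)‖₊ : ℝ≥0∞)) ^ (2 : ℝ)) ^ ((1:ℝ)/2)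

/-- The mixed norm `‖f‖_{L^∞_{x₁} L²_{x₂ T}}`. -/
def LinfX1L2Norm (T : ℝ) (f : ℝ → ℝ × ℝ → ℂ) : ℝ≥0∞ :=
  ⨆ x₁ : ℝ,
    (∫⁻ x₂ : ℝ, ∫⁻ t in Set.Icc (0:ℝ) T, (‖f t (x₁, x₂)‖₊ : ℝ≥0∞) ^ (2 : ℝ)) ^ ((1:ℝ)/2)

/-- The mixed norm `‖g‖_{L¹_{x₁} L²_{x₂ T}}`. -/
def L1x1L2Norm (T : ℝ) (g : ℝ → ℝ × ℝ → ℂ) : ℝ≥0∞ :=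
  ∫⁻ x₁ : ℝ,
    (∫⁻ x₂ : ℝ, ∫⁻ τ in Set.Icc (0:ℝ) T, (‖g τ (x₁, x₂)‖₊ : ℝ≥0∞) ^ (2 : ℝ)) ^ ((1:ℝ)/2)

/-! ### Gaussian kernels -/

/-- The Fourier transform `∫ e^{iut} e^{-εt²} dt = √(π/ε) e^{-u²/(4ε)}` of the Gaussian of
parameter `ε`: a positive kernel of total mass `2π`. -/
def gk (ε u : ℝ) : ℝ := √(Real.pi / ε) * Real.exp (-(u ^ 2) / (4 * ε))

lemma gk_nonneg (ε u : ℝ) : 0 ≤ gk ε u := by unfold gk; positivity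

lemma gk_neg (ε u : ℝ) : gk ε (-u) = gk ε u := by simp [gk]

@[fun_prop]
lemma continuous_gk (ε : ℝ) : Continuous (gk ε) := by unfold gk; fun_prop

lemma integral_exp_mul_gauss {ε : ℝ} (hε : 0 < ε) (u : ℝ) :
    ∫ t : ℝ, Complex.exp (Complex.I * ((u * t : ℝ) : ℂ)) * ((Real.exp (-ε * t ^ 2) : ℝ) : ℂ)
      = ((gk ε u : ℝ) : ℂ) := by
  have h := fourierIntegral_gaussian (b := (ε : ℂ)) (by simpa using hε) (u : ℂ)
  calc _ = ∫ x : ℝ, Complex.exp (Complex.I * u * x) * Complex.exp (-(ε : ℂ) * x ^ 2) := by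
        congr 1; ext t; push_cast; ring_nf
    _ = _ := by
        rw [h, gk, Real.sqrt_eq_rpow]
        push_cast
        rw [Complex.ofReal_cpow (by positivity)]
        push_cast
        rfl

lemma lintegral_gk {ε : ℝ} (hε : 0 < ε) :
    ∫⁻ u : ℝ, ENNReal.ofReal (gk ε u) = ENNReal.ofReal (2 * Real.pi) := by
  have h1 : ∀ u, gk ε u = √(Real.pi / ε) * Real.exp (-(1 / (4 * ε)) * u ^ 2) := by
    intro u; unfold gk; congr 2; ring
  have hi : Integrable (gk ε) := by
    rw [funext h1]
    exact (integrable_exp_neg_mul_sq (by positivity)).const_mul _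
  rw [← ofReal_integral_eq_lintegral_ofReal hi (ae_of_all _ (gk_nonneg ε))]
  congr 1
  simp_rw [h1]
  rw [integral_const_mul, integral_gaussian, ← Real.sqrt_mul (by positivity)]
  rw [show Real.pi / ε * (Real.pi / (1 / (4 * ε))) = (2 * Real.pi) ^ 2 by field_simp; ring]
  exact Real.sqrt_sq (by positivity)

/-- Change of variables `y = q x`. As `q` is monotone but perhaps not onto, this is an inequality. -/
lemma lintegral_gk_comp_le {ε : ℝ} (hε : 0 < ε) {q q' : ℝ → ℝ}
    (hq : ∀ x, HasDerivAt q (q' x) x) (h0 : ∀ x, 0 ≤ q' x) (v : ℝ) :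
    ∫⁻ x, ENNReal.ofReal (q' x) * ENNReal.ofReal (gk ε (v - q x)) ≤
      ENNReal.ofReal (2 * Real.pi) := by
  have hm : Monotone q := monotone_of_hasDerivAt_nonneg hq h0
  have h := lintegral_image_eq_lintegral_deriv_mul_of_monotoneOn (s := Set.univ) (f := q)
    MeasurableSet.univ (fun x _ => (hq x).hasDerivWithinAt) (hm.monotoneOn _)
    (fun y => ENNReal.ofReal (gk ε (v - y)))
  rw [Measure.restrict_univ] at h
  rw [← h]
  refine (setLIntegral_le_lintegral _ _).trans ?_
  rw [lintegral_sub_left_eq_self (fun y => ENNReal.ofReal (gk ε y)) v, lintegral_gk hε]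

/-- Weighted arithmetic–geometric mean inequality; crossing the weights `p`, `q` avoids dividing by
them, so they may vanish. -/
lemma mul_le_half_of_sq_le {x y p q a b : ℝ} (hp : 0 ≤ p) (hq : 0 ≤ q)
    (ha : 0 ≤ a) (hb : 0 ≤ b) (hx : x ^ 2 ≤ p * a) (hy : y ^ 2 ≤ q * b) :
    x * y ≤ (q * a + p * b) / 2 := by
  have h1 : (x * y) ^ 2 ≤ (p * a) * (q * b) := by
    rw [mul_pow]; gcongr
  have h2 : (p * a) * (q * b) ≤ ((q * a + p * b) / 2) ^ 2 := by
    nlinarith [sq_nonneg (q * a - p * b)]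
  exact le_of_abs_le (abs_le_of_sq_le_sq (h1.trans h2) (by positivity))

/-- **Minkowski's integral inequality** in `L²`. -/
theorem lintegral_L2_minkowski {α β : Type*} [MeasurableSpace α] [MeasurableSpace β] (μ : Measure α)
    (ν : Measure β) [SFinite μ] [SFinite ν] (F : α → β → ℝ≥0∞)
    (hF : Measurable (Function.uncurry F)) :
    (∫⁻ y, (∫⁻ τ, F τ y ∂μ) ^ (2 : ℝ) ∂ν) ^ ((1 : ℝ) / 2) ≤
      ∫⁻ τ, (∫⁻ y, F τ y ^ (2 : ℝ) ∂ν) ^ ((1 : ℝ) / 2) ∂μ := by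
  set N : α → ℝ≥0∞ := fun τ => (∫⁻ y, F τ y ^ (2 : ℝ) ∂ν) ^ ((1 : ℝ) / 2) with hN
  have hF1 : ∀ τ, Measurable (F τ) := fun τ => hF.comp measurable_prodMk_left
  have hF2 : ∀ y, Measurable (fun τ => F τ y) := fun y => hF.comp measurable_prodMk_right
  have hNm : Measurable N :=
    ((hF.pow_const (2 : ℝ)).lintegral_prod_right' (ν := ν)).pow_const _
  have key : ∫⁻ y, (∫⁻ τ, F τ y ∂μ) ^ (2 : ℝ) ∂ν ≤ (∫⁻ τ, N τ ∂μ) ^ (2 : ℝ) := by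
    have hm3 : Measurable (fun z : β × α × α => F z.2.1 z.1 * F z.2.2 z.1) :=
      (hF.comp (measurable_snd.fst.prodMk measurable_fst)).mul
        (hF.comp (measurable_snd.snd.prodMk measurable_fst))
    calc ∫⁻ y, (∫⁻ τ, F τ y ∂μ) ^ (2 : ℝ) ∂ν
        = ∫⁻ y, ∫⁻ z : α × α, F z.1 y * F z.2 y ∂(μ.prod μ) ∂ν := by
          congr 1; ext y
          rw [ENNReal.rpow_two, sq,
            lintegral_prod_mul (hF2 y).aemeasurable (hF2 y).aemeasurable]
      _ = ∫⁻ z : α × α, ∫⁻ y, F z.1 y * F z.2 y ∂ν ∂(μ.prod μ) :=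
          lintegral_lintegral_swap hm3.aemeasurable
      _ ≤ ∫⁻ z : α × α, N z.1 * N z.2 ∂(μ.prod μ) := by
          refine lintegral_mono fun z => ?_
          exact ENNReal.lintegral_mul_le_Lp_mul_Lq ν Real.HolderConjugate.two_two
            (hF1 z.1).aemeasurable (hF1 z.2).aemeasurable
      _ = _ := by
          rw [lintegral_prod_mul hNm.aemeasurable hNm.aemeasurable, ENNReal.rpow_two, sq]
  calc _ ≤ ((∫⁻ τ, N τ ∂μ) ^ (2 : ℝ)) ^ ((1 : ℝ) / 2) := by gcongr
    _ = _ := by rw [← ENNReal.rpow_mul]; norm_num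

/-! ### An `L²` bound for oscillatory integrals -/

/-- The oscillatory integral `z ↦ ∫ e^{i(z₁ A(a) + z₂ B(a))} f(a) da` with phases `A` and `B`. -/
def osc (A B : ℝ × ℝ → ℝ) (f : ℝ × ℝ → ℂ) (z : ℝ × ℝ) : ℂ :=
  ∫ a : ℝ × ℝ, Complex.exp (Complex.I * ((z.1 * A a + z.2 * B a : ℝ) : ℂ)) * f a

lemma norm_exp_I_mul (r : ℝ) : ‖Complex.exp (Complex.I * (r : ℂ))‖ = 1 := by
  rw [mul_comm]; exact Complex.norm_exp_ofReal_mul_I r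

lemma continuous_osc {A B : ℝ × ℝ → ℝ} {f : ℝ × ℝ → ℂ} (hA : Continuous A) (hB : Continuous B)
    (hf : Continuous f) (hfi : Integrable f) : Continuous (osc A B f) := by
  refine continuous_of_dominated (bound := fun a => ‖f a‖) (fun z => ?_) (fun z => ?_) hfi.norm ?_
  · exact Continuous.aestronglyMeasurable (by fun_prop)
  · refine ae_of_all _ fun a => ?_
    rw [norm_mul, norm_exp_I_mul, one_mul]
  · exact ae_of_all _ fun a => by fun_prop

lemma integral_gauss_two {ε : ℝ} (hε : 0 < ε) (u v : ℝ) :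
    ∫ z : ℝ × ℝ, ((Real.exp (-ε * z.1 ^ 2) * Real.exp (-ε * z.2 ^ 2) : ℝ) : ℂ) *
      Complex.exp (Complex.I * ((z.1 * u + z.2 * v : ℝ) : ℂ)) = ((gk ε u * gk ε v : ℝ) : ℂ) := by
  rw [Complex.ofReal_mul, ← integral_exp_mul_gauss hε u, ← integral_exp_mul_gauss hε v,
    ← integral_prod_mul]
  congr 1; ext z
  have : Complex.exp (Complex.I * ((z.1 * u + z.2 * v : ℝ) : ℂ)) =
    Complex.exp (Complex.I * ((u * z.1 : ℝ) : ℂ)) * Complex.exp (Complex.I * ((v * z.2 : ℝ) : ℂ)) := by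
    rw [← Complex.exp_add]; push_cast; ring_nf
  rw [this]; push_cast; ring

/-- Gaussian-regularized `L²` norm of `osc A B f`: expand the square and integrate in `z` first. -/
lemma osc_gauss {A B : ℝ × ℝ → ℝ} {f : ℝ × ℝ → ℂ} (hA : Continuous A) (hB : Continuous B)
    (hf : Continuous f) (hfi : Integrable f) {ε : ℝ} (hε : 0 < ε) :
    ∫ z : ℝ × ℝ, (((Real.exp (-ε * z.1 ^ 2) * Real.exp (-ε * z.2 ^ 2)) *
        ‖osc A B f z‖ ^ 2 : ℝ) : ℂ) =
      ∫ c : (ℝ × ℝ) × (ℝ × ℝ), f c.1 * (starRingEnd ℂ) (f c.2) *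
        ((gk ε (A c.1 - A c.2) * gk ε (B c.1 - B c.2) : ℝ) : ℂ) := by
  let G : ℝ × ℝ → ℝ := fun z => Real.exp (-ε * z.1 ^ 2) * Real.exp (-ε * z.2 ^ 2)
  have hG : Integrable G :=
    (integrable_exp_neg_mul_sq hε).mul_prod (integrable_exp_neg_mul_sq hε)
  let K : ℝ × ℝ → (ℝ × ℝ) × (ℝ × ℝ) → ℂ := fun z c =>
    (f c.1 * (starRingEnd ℂ) (f c.2)) * ((G z : ℂ) * Complex.exp (Complex.I *
      ((z.1 * (A c.1 - A c.2) + z.2 * (B c.1 - B c.2) : ℝ) : ℂ)))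
  have hKi : Integrable (Function.uncurry K) (volume.prod volume) := by
    have h1 : Integrable (fun w : (ℝ × ℝ) × (ℝ × ℝ) × (ℝ × ℝ) =>
        G w.1 * (‖f w.2.1‖ * ‖f w.2.2‖)) (volume.prod (volume.prod volume)) :=
      hG.mul_prod (hfi.norm.mul_prod hfi.norm)
    refine Integrable.mono' h1 ?_ (ae_of_all _ fun w => ?_)
    · refine Continuous.aestronglyMeasurable ?_
      simp only [K, G, Function.uncurry_def]
      fun_prop
    · simp only [K, Function.uncurry_def, norm_mul, norm_exp_I_mul, RCLike.norm_conj,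
        Complex.norm_real]
      rw [Real.norm_of_nonneg (by positivity : 0 ≤ G w.1)]
      exact le_of_eq (by ring)
  calc _ = ∫ z : ℝ × ℝ, ∫ c : (ℝ × ℝ) × (ℝ × ℝ), K z c := by
        congr 1; ext z
        have h2 : ((‖osc A B f z‖ ^ 2 : ℝ) : ℂ) = osc A B f z * (starRingEnd ℂ) (osc A B f z) := by
          rw [Complex.mul_conj, Complex.normSq_eq_norm_sq]
        rw [Complex.ofReal_mul, h2]
        rw [osc, ← integral_conj, ← integral_prod_mul, ← integral_const_mul]
        congr 1; ext c
        simp only [K, map_mul, ← Complex.exp_conj, Complex.conj_I, Complex.conj_ofReal]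
        have : Complex.exp (Complex.I *
            ((z.1 * (A c.1 - A c.2) + z.2 * (B c.1 - B c.2) : ℝ) : ℂ)) =
            Complex.exp (Complex.I * ((z.1 * A c.1 + z.2 * B c.1 : ℝ) : ℂ)) *
            Complex.exp (-Complex.I * ((z.1 * A c.2 + z.2 * B c.2 : ℝ) : ℂ)) := by
          rw [← Complex.exp_add]; push_cast; ring_nf
        rw [this]
        simp only [G]
        ring
    _ = ∫ c : (ℝ × ℝ) × (ℝ × ℝ), ∫ z : ℝ × ℝ, K z c := integral_integral_swap hKi
    _ = _ := by
        congr 1; ext c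
        rw [integral_const_mul, integral_gauss_two hε]

/-- Schur's test for the double integral of `osc_gauss`. -/
lemma osc_gauss_le {A B : ℝ × ℝ → ℝ} {f : ℝ × ℝ → ℂ} {p H : ℝ × ℝ → ℝ} {m : ℝ≥0∞}
    (hA : Continuous A) (hB : Continuous B)
    (hf : Continuous f) (hfi : Integrable f) (hp : Continuous p) (hH : Continuous H)
    (hp0 : ∀ a, 0 ≤ p a) (hH0 : ∀ a, 0 ≤ H a) (hfb : ∀ a, ‖f a‖ ^ 2 ≤ p a * H a)
    {ε : ℝ} (hε : 0 < ε)
    (hK : ∀ u v, ∫⁻ b, ENNReal.ofReal (gk ε (u - A b) * gk ε (v - B b) * p b) ≤ m) :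
    ∫⁻ z : ℝ × ℝ, ENNReal.ofReal ((Real.exp (-ε * z.1 ^ 2) * Real.exp (-ε * z.2 ^ 2)) *
        ‖osc A B f z‖ ^ 2) ≤ m * ∫⁻ a, ENNReal.ofReal (H a) := by
  have hG : Integrable (fun z : ℝ × ℝ => Real.exp (-ε * z.1 ^ 2) * Real.exp (-ε * z.2 ^ 2)) :=
    (integrable_exp_neg_mul_sq hε).mul_prod (integrable_exp_neg_mul_sq hε)
  have hoc := continuous_osc hA hB hf hfi
  have hob : ∀ z, ‖osc A B f z‖ ≤ ∫ a, ‖f a‖ := fun z => by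
    refine (norm_integral_le_integral_norm _).trans (le_of_eq ?_)
    congr 1; ext a
    rw [norm_mul, norm_exp_I_mul, one_mul]
  have hI : Integrable (fun z : ℝ × ℝ =>
      (Real.exp (-ε * z.1 ^ 2) * Real.exp (-ε * z.2 ^ 2)) * ‖osc A B f z‖ ^ 2) := by
    refine Integrable.mono' (hG.mul_const ((∫ a, ‖f a‖) ^ 2))
      (Continuous.aestronglyMeasurable (by fun_prop)) (ae_of_all _ fun z => ?_)
    rw [Real.norm_of_nonneg (by positivity)]
    gcongr
    exact hob z
  have hI0 : 0 ≤ ∫ z : ℝ × ℝ,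
      (Real.exp (-ε * z.1 ^ 2) * Real.exp (-ε * z.2 ^ 2)) * ‖osc A B f z‖ ^ 2 :=
    integral_nonneg fun z => by positivity
  let k : (ℝ × ℝ) × (ℝ × ℝ) → ℝ := fun c => gk ε (A c.1 - A c.2) * gk ε (B c.1 - B c.2)
  have hk0 : ∀ c, 0 ≤ k c := fun c => mul_nonneg (gk_nonneg _ _) (gk_nonneg _ _)
  have hkc : Continuous k := by simp only [k]; fun_prop
  have hks : ∀ a b, k (a, b) = k (b, a) := fun a b => by
    simp only [k]
    rw [← gk_neg ε (A a - A b), ← gk_neg ε (B a - B b), neg_sub, neg_sub]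
  have hJ1 : ∫⁻ c, ENNReal.ofReal (k c * p c.2) * ENNReal.ofReal (H c.1) ≤
      m * ∫⁻ a, ENNReal.ofReal (H a) := by
    rw [Measure.volume_eq_prod, lintegral_prod _ (by fun_prop), ← lintegral_const_mul _ (by fun_prop)]
    refine lintegral_mono fun a => ?_
    change ∫⁻ b, ENNReal.ofReal (k (a, b) * p b) * ENNReal.ofReal (H a) ≤ _
    rw [lintegral_mul_const _ (by fun_prop)]
    gcongr
    exact hK (A a) (B a)
  have hJ2 : ∫⁻ c, ENNReal.ofReal (k c * p c.1) * ENNReal.ofReal (H c.2) ≤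
      m * ∫⁻ a, ENNReal.ofReal (H a) := by
    refine le_trans (le_of_eq ?_) hJ1
    rw [Measure.volume_eq_prod, ← lintegral_prod_swap]
    refine lintegral_congr fun c => ?_
    obtain ⟨a, b⟩ := c
    simp only [Prod.swap, hks a b]
  rw [← ofReal_integral_eq_lintegral_ofReal hI (ae_of_all _ fun z => by positivity)]
  have e1 : ENNReal.ofReal (∫ z : ℝ × ℝ,
      (Real.exp (-ε * z.1 ^ 2) * Real.exp (-ε * z.2 ^ 2)) * ‖osc A B f z‖ ^ 2) =
      ‖∫ z : ℝ × ℝ, (((Real.exp (-ε * z.1 ^ 2) * Real.exp (-ε * z.2 ^ 2)) *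
        ‖osc A B f z‖ ^ 2 : ℝ) : ℂ)‖ₑ := by
    rw [integral_complex_ofReal, ← ofReal_norm, Complex.norm_real,
      Real.norm_of_nonneg hI0]
  rw [e1, osc_gauss hA hB hf hfi hε]
  refine (enorm_integral_le_lintegral_enorm _).trans ?_
  calc _ ≤ ∫⁻ c : (ℝ × ℝ) × (ℝ × ℝ), (2⁻¹ : ℝ≥0∞) *
        (ENNReal.ofReal (k c * p c.2) * ENNReal.ofReal (H c.1) +
          ENNReal.ofReal (k c * p c.1) * ENNReal.ofReal (H c.2)) := by
        refine lintegral_mono fun c => ?_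
        have h2 : (2⁻¹ : ℝ≥0∞) = ENNReal.ofReal (2⁻¹) := by
          rw [ENNReal.ofReal_inv_of_pos (by norm_num)]; norm_num
        have := hk0 c
        have := hp0 c.1
        have := hp0 c.2
        have := hH0 c.1
        have := hH0 c.2
        rw [h2, ← ENNReal.ofReal_mul (by positivity), ← ENNReal.ofReal_mul (by positivity),
          ← ENNReal.ofReal_add (by positivity) (by positivity),
          ← ENNReal.ofReal_mul (by positivity), ← ofReal_norm]
        apply ENNReal.ofReal_le_ofReal
        rw [norm_mul, norm_mul, RCLike.norm_conj, Complex.norm_real, Real.norm_of_nonneg (hk0 c)]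
        have h3 := mul_le_half_of_sq_le (hp0 c.1) (hp0 c.2) (hH0 c.1) (hH0 c.2) (hfb c.1) (hfb c.2)
        change _ * k c ≤ _
        nlinarith [mul_le_mul_of_nonneg_right h3 (hk0 c)]
    _ ≤ 2⁻¹ * (m * (∫⁻ a, ENNReal.ofReal (H a)) + m * ∫⁻ a, ENNReal.ofReal (H a)) := by
        rw [lintegral_const_mul _ (by fun_prop), lintegral_add_left (by fun_prop)]
        gcongr
    _ = _ := by
        rw [← two_mul, ← mul_assoc, ENNReal.inv_mul_cancel (by norm_num) (by norm_num), one_mul]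

/-- `TT*` bound: if the positive kernels `gk ε (A a - A b) * gk ε (B a - B b)` integrated in `b`
against the weight `p` are at most `m`, uniformly in `ε`, and `|f|² ≤ p H`, then
`‖osc A B f‖²_{L²} ≤ m ∫ H`. Follows from `osc_gauss_le` by Fatou's lemma as `ε → 0`. -/
theorem osc_L2_le {A B : ℝ × ℝ → ℝ} {f : ℝ × ℝ → ℂ} {p H : ℝ × ℝ → ℝ} {m : ℝ≥0∞}
    (hA : Continuous A) (hB : Continuous B)
    (hf : Continuous f) (hfi : Integrable f) (hp : Continuous p) (hH : Continuous H)
    (hp0 : ∀ a, 0 ≤ p a) (hH0 : ∀ a, 0 ≤ H a) (hfb : ∀ a, ‖f a‖ ^ 2 ≤ p a * H a)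
    (hK : ∀ ε, 0 < ε → ∀ u v,
      ∫⁻ b, ENNReal.ofReal (gk ε (u - A b) * gk ε (v - B b) * p b) ≤ m) :
    ∫⁻ z : ℝ × ℝ, ‖osc A B f z‖ₑ ^ (2 : ℝ) ≤ m * ∫⁻ a, ENNReal.ofReal (H a) := by
  have hoc := continuous_osc hA hB hf hfi
  let ε : ℕ → ℝ := fun n => 1 / ((n : ℝ) + 1)
  have hε : ∀ n, 0 < ε n := fun n => by simp only [ε]; positivity
  have hε0 : Filter.Tendsto ε Filter.atTop (nhds 0) := tendsto_one_div_add_atTop_nhds_zero_nat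
  let F : ℕ → ℝ × ℝ → ℝ≥0∞ := fun n z =>
    ENNReal.ofReal ((Real.exp (-ε n * z.1 ^ 2) * Real.exp (-ε n * z.2 ^ 2)) * ‖osc A B f z‖ ^ 2)
  have hlim : ∀ z, Filter.Tendsto (fun n => F n z) Filter.atTop (nhds (‖osc A B f z‖ₑ ^ (2 : ℝ))) := by
    intro z
    have h1 : ‖osc A B f z‖ₑ ^ (2 : ℝ) = ENNReal.ofReal
        ((Real.exp (-0 * z.1 ^ 2) * Real.exp (-0 * z.2 ^ 2)) * ‖osc A B f z‖ ^ 2) := by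
      rw [ENNReal.rpow_two, ← ofReal_norm, ← ENNReal.ofReal_pow (norm_nonneg _)]
      simp
    rw [h1]
    have h2 : Continuous fun e : ℝ => ENNReal.ofReal
        ((Real.exp (-e * z.1 ^ 2) * Real.exp (-e * z.2 ^ 2)) * ‖osc A B f z‖ ^ 2) :=
      ENNReal.continuous_ofReal.comp (by fun_prop)
    exact (h2.tendsto 0).comp hε0
  calc _ = ∫⁻ z, Filter.liminf (fun n => F n z) Filter.atTop :=
        lintegral_congr fun z => (hlim z).liminf_eq.symm
    _ ≤ Filter.liminf (fun n => ∫⁻ z, F n z) Filter.atTop :=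
        lintegral_liminf_le fun n => by simp only [F]; fun_prop
    _ ≤ _ := Filter.liminf_le_of_le (by isBoundedDefault) fun b hb => by
        obtain ⟨n, hn⟩ := hb.exists
        exact hn.trans (osc_gauss_le hA hB hf hfi hp hH hp0 hH0 hfb (hε n) (hK _ (hε n)))

/-! ### The Fourier transform of a continuous family of Schwartz functions -/

/-- The identification of the Euclidean plane, where Mathlib's Fourier transform lives, with
`ℝ × ℝ`. -/
def euc : EuclideanSpace ℝ (Fin 2) ≃L[ℝ] ℝ × ℝ :=
  (EuclideanSpace.equiv (Fin 2) ℝ).trans (ContinuousLinearEquiv.finTwoArrow ℝ ℝ)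

lemma euc_mp : MeasurePreserving euc :=
  (volume_preserving_finTwoArrow ℝ).comp (PiLp.volume_preserving_ofLp (Fin 2))

open scoped FourierTransform in
/-- `FT` is a continuous linear map of the Schwartz space into itself. -/
lemma exists_FT_clm : ∃ L : SchwartzMap (ℝ × ℝ) ℂ →L[ℂ] SchwartzMap (ℝ × ℝ) ℂ,
    ∀ φ, ⇑(L φ) = FT φ := by
  refine ⟨(SchwartzMap.compCLMOfContinuousLinearEquiv ℂ euc.symm) ∘L
    (SchwartzMap.fourierTransformCLM ℂ) ∘L
    (SchwartzMap.compCLMOfContinuousLinearEquiv ℂ euc), fun φ => ?_⟩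
  ext ξ
  change 𝓕 (⇑φ ∘ euc) (euc.symm ξ) = FT φ ξ
  rw [Real.fourier_eq', FT, ← euc_mp.integral_comp euc.toHomeomorph.measurableEmbedding]
  congr 1; ext x
  simp [euc, EuclideanSpace.inner_eq_star_dotProduct]
  left
  simp only [Matrix.vecHead, Matrix.vecTail, Function.comp_apply, Fin.succ_zero_eq_one]
  ring_nf

lemma schwartz_decay (ψ : SchwartzMap (ℝ × ℝ) ℂ) (ξ : ℝ × ℝ) :
    ‖ψ ξ‖ ≤ 8 * (SchwartzMap.seminorm ℝ 0 0 ψ + SchwartzMap.seminorm ℝ 4 0 ψ)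
      * ((1 + ‖ξ‖) ^ 4)⁻¹ := by
  have h0 := SchwartzMap.norm_le_seminorm ℝ ψ ξ
  have h4 := SchwartzMap.norm_pow_mul_le_seminorm ℝ ψ 4 ξ
  rw [← div_eq_mul_inv, le_div_iff₀ (by positivity)]
  have : (1 + ‖ξ‖) ^ 4 ≤ 8 * (1 + ‖ξ‖ ^ 4) := by
    nlinarith [sq_nonneg (‖ξ‖ - 1), sq_nonneg (‖ξ‖ ^ 2 - 1), norm_nonneg ξ, sq_nonneg (‖ξ‖ ^ 2 - ‖ξ‖)]
  nlinarith [norm_nonneg (ψ ξ)]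

/-- The Fourier transforms of an admissible source are jointly continuous and decay uniformly on
`[0,T]`, by compactness. The family is extended to all times by its values at the endpoints. -/
lemma family_bound {T : ℝ} (hT : 0 ≤ T) (g : ℝ → SchwartzMap (ℝ × ℝ) ℂ)
    (hg : ContinuousOn g (Set.Icc 0 T)) :
    ∃ (a : ℝ → ℝ × ℝ → ℂ) (M : ℝ), Continuous (Function.uncurry a) ∧
      (∀ τ ξ, ‖a τ ξ‖ ≤ M * ((1 + ‖ξ‖) ^ 4)⁻¹) ∧
      ∀ τ ∈ Set.Icc 0 T, a τ = FT (g τ) := by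
  obtain ⟨L, hL⟩ := exists_FT_clm
  let S : Set.Icc 0 T → SchwartzMap (ℝ × ℝ) ℂ := fun τ => L (g τ)
  have hS : Continuous S := L.continuous.comp (continuousOn_iff_continuous_domRestrict.1 hg)
  let P : ℝ → Set.Icc 0 T := Set.projIcc 0 T hT
  have hP : Continuous P := continuous_projIcc
  have hs : ∀ k : ℕ, Continuous fun τ => SchwartzMap.seminorm ℝ k 0 (S τ) := fun k =>
    ((schwartz_withSeminorms ℝ (ℝ × ℝ) ℂ).continuous_seminorm (k, 0)).comp hS
  obtain ⟨M, hM⟩ := isCompact_univ.exists_bound_of_continuousOn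
    (f := fun τ => 8 * (SchwartzMap.seminorm ℝ 0 0 (S τ) + SchwartzMap.seminorm ℝ 4 0 (S τ)))
    (by have := hs 0; have := hs 4; fun_prop)
  refine ⟨fun τ => S (P τ), M, ?_, fun τ ξ => ?_, fun τ hτ => ?_⟩
  · have h1 : Continuous fun z : ℝ × (ℝ × ℝ) =>
        (SchwartzMap.toBoundedContinuousFunctionCLM ℂ (ℝ × ℝ) ℂ (S (P z.1)), z.2) :=
      (((SchwartzMap.toBoundedContinuousFunctionCLM ℂ (ℝ × ℝ) ℂ).continuous.comp
        (hS.comp (hP.comp continuous_fst)))).prodMk continuous_snd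
    exact continuous_eval.comp h1
  · refine (schwartz_decay _ _).trans ?_
    gcongr
    exact (Real.le_norm_self _).trans (hM (P τ) (Set.mem_univ _))
  · simp only [S, P, hL, Set.projIcc_of_mem hT hτ]

/-! ### Two phases: the plane-wave transform and the dispersive one -/

/-- The bound `osc_L2_le` for the phases `2πξ₂` and `q(ξ₁,ξ₂)`, where `q` is nondecreasing in `ξ₁`
with `ξ₁`-derivative `q'`. The Schur condition holds because integrating the kernel against the
weight `2πq'` is a change of variables in each coordinate separately. -/
lemma osc_phase_le {q q' : ℝ × ℝ → ℝ} {f : ℝ × ℝ → ℂ} {H : ℝ × ℝ → ℝ}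
    (hq : Continuous q) (hq' : Continuous q')
    (hd : ∀ s x, HasDerivAt (fun y => q (y, s)) (q' (x, s)) x) (h0 : ∀ b, 0 ≤ q' b)
    (hf : Continuous f) (hfi : Integrable f) (hH : Continuous H)
    (hH0 : ∀ a, 0 ≤ H a) (hfb : ∀ a, ‖f a‖ ^ 2 ≤ q' a * H a) :
    ∫⁻ z : ℝ × ℝ, ‖osc (fun b => 2 * Real.pi * b.2) q f z‖ₑ ^ (2 : ℝ) ≤
      ENNReal.ofReal (2 * Real.pi) * ∫⁻ a, ENNReal.ofReal (H a) := by
  have hpi := Real.pi_pos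
  have hK : ∀ ε, 0 < ε → ∀ u v, ∫⁻ b : ℝ × ℝ, ENNReal.ofReal
      (gk ε (u - 2 * Real.pi * b.2) * gk ε (v - q b) * (2 * Real.pi * q' b)) ≤
      ENNReal.ofReal (2 * Real.pi) * ENNReal.ofReal (2 * Real.pi) := by
    intro ε hε u v
    rw [Measure.volume_eq_prod, lintegral_prod_symm _ (by fun_prop)]
    have hin : ∀ s : ℝ, ∫⁻ x : ℝ, ENNReal.ofReal
        (gk ε (u - 2 * Real.pi * s) * gk ε (v - q (x, s)) * (2 * Real.pi * q' (x, s))) ≤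
        (ENNReal.ofReal (2 * Real.pi) * ENNReal.ofReal (gk ε (u - 2 * Real.pi * s))) *
          ENNReal.ofReal (2 * Real.pi) := by
      intro s
      calc _ = ∫⁻ x : ℝ, (ENNReal.ofReal (2 * Real.pi) *
            ENNReal.ofReal (gk ε (u - 2 * Real.pi * s))) *
              (ENNReal.ofReal (q' (x, s)) * ENNReal.ofReal (gk ε (v - q (x, s)))) := by
            refine lintegral_congr fun x => ?_
            have := gk_nonneg ε (u - 2 * Real.pi * s)
            have := gk_nonneg ε (v - q (x, s))
            have := h0 (x, s)
            rw [← ENNReal.ofReal_mul (by positivity), ← ENNReal.ofReal_mul (by positivity),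
              ← ENNReal.ofReal_mul (by positivity)]
            congr 1; ring
        _ ≤ _ := by
            rw [lintegral_const_mul _ (by fun_prop)]
            gcongr
            exact lintegral_gk_comp_le hε (hd s) (fun x => h0 _) v
    refine (lintegral_mono hin).trans ?_
    rw [lintegral_mul_const _ (by fun_prop)]
    gcongr
    exact lintegral_gk_comp_le (q := fun s => 2 * Real.pi * s) (q' := fun _ => 2 * Real.pi) hε
      (fun x => by simpa using (hasDerivAt_id x).const_mul (2 * Real.pi)) (fun _ => by positivity) u
  have h := osc_L2_le (A := fun b : ℝ × ℝ => 2 * Real.pi * b.2) (B := q)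
    (p := fun b => 2 * Real.pi * q' b) (H := fun b => (2 * Real.pi)⁻¹ * H b)
    (by fun_prop) hq hf hfi (by fun_prop) (by fun_prop)
    (fun a => mul_nonneg (by positivity) (h0 a)) (fun a => mul_nonneg (by positivity) (hH0 a))
    (fun a => (hfb a).trans (le_of_eq (by field_simp))) hK
  refine h.trans (le_of_eq ?_)
  rw [← lintegral_const_mul _ (by fun_prop), ← lintegral_const_mul _ (by fun_prop)]
  refine lintegral_congr fun a => ?_
  have := hH0 a
  rw [← ENNReal.ofReal_mul (by positivity), ← ENNReal.ofReal_mul (by positivity),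
    ← ENNReal.ofReal_mul (by positivity)]
  congr 1; field_simp

/-- The half of Plancherel's identity that is needed, from `osc_phase_le` with `q = 2πξ₁`. -/
lemma lintegral_FT_le (φ : SchwartzMap (ℝ × ℝ) ℂ) :
    ∫⁻ ξ, ‖FT φ ξ‖ₑ ^ (2 : ℝ) ≤ ∫⁻ x, ‖φ x‖ₑ ^ (2 : ℝ) := by
  have hpi := Real.pi_pos
  have hFT : ∀ ξ : ℝ × ℝ, FT φ ξ =
      osc (fun b => 2 * Real.pi * b.2) (fun b => 2 * Real.pi * b.1) φ (-ξ.swap) := by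
    intro ξ
    rw [FT, osc]
    congr 1; ext x
    simp only [Prod.fst_neg, Prod.snd_neg, Prod.fst_swap, Prod.snd_swap]
    congr 2
    rw [mul_comm]
    congr 2
    ring
  have h := osc_phase_le (q := fun b : ℝ × ℝ => 2 * Real.pi * b.1) (q' := fun _ => 2 * Real.pi)
    (f := φ) (H := fun b => (2 * Real.pi)⁻¹ * ‖φ b‖ ^ 2) (by fun_prop) (by fun_prop)
    (fun s x => by simpa using (hasDerivAt_id x).const_mul (2 * Real.pi)) (fun _ => by positivity)
    φ.continuous φ.integrable (by have := φ.continuous; fun_prop) (fun a => by positivity)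
    (fun a => le_of_eq (by field_simp))
  calc _ = ∫⁻ z : ℝ × ℝ, ‖osc (fun b => 2 * Real.pi * b.2) (fun b => 2 * Real.pi * b.1) φ z‖ₑ
        ^ (2 : ℝ) := by
        simp_rw [hFT]
        rw [← lintegral_neg_eq_self, Measure.volume_eq_prod, ← lintegral_prod_swap]
        refine lintegral_congr fun z => ?_
        congr 3
        ext <;> simp
    _ ≤ _ := h
    _ = _ := by
        rw [← lintegral_const_mul _ (by have := φ.continuous; fun_prop)]
        refine lintegral_congr fun a => ?_
        rw [← ENNReal.ofReal_mul (by positivity), ← ofReal_norm, ENNReal.rpow_two,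
          ← ENNReal.ofReal_pow (norm_nonneg _)]
        congr 1; field_simp

/-- The symbol `ξ₁(ξ₁² + ξ₂²)` of the Zakharov–Kuznetsov group. -/
def zk (ξ : ℝ × ℝ) : ℝ := ξ.1 * (ξ.1 ^ 2 + ξ.2 ^ 2)

@[fun_prop]
lemma continuous_zk : Continuous zk := by unfold zk; fun_prop

/-- For `a τ = F(g(τ))`, the integrand in frequency of `U(t-τ) g(τ) (x₁, x₂)`, with the two
exponentials combined into one. -/
def Phi (a : ℝ → ℝ × ℝ → ℂ) (τ : ℝ) (t x₁ x₂ : ℝ) (ξ : ℝ × ℝ) : ℂ :=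
  Complex.exp (Complex.I *
    ((2 * Real.pi * (x₁ * ξ.1 + x₂ * ξ.2) + (t - τ) * zk ξ : ℝ) : ℂ)) * a τ ξ

/-- For `a τ = F(g(τ))`, the function `∂_{x₁} U(t-τ) g(τ) (x₁, x₂)`, obtained by differentiating
under the integral sign. -/
def dU (a : ℝ → ℝ × ℝ → ℂ) (τ t x₁ x₂ : ℝ) : ℂ :=
  ∫ ξ : ℝ × ℝ, ((2 * Real.pi * ξ.1 : ℝ) * Complex.I) * Phi a τ t x₁ x₂ ξ

lemma norm_Phi (a : ℝ → ℝ × ℝ → ℂ) (τ t x₁ x₂ : ℝ) (ξ : ℝ × ℝ) :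
    ‖Phi a τ t x₁ x₂ ξ‖ = ‖a τ ξ‖ := by
  rw [Phi, norm_mul, norm_exp_I_mul, one_mul]

lemma norm_dPhi (a : ℝ → ℝ × ℝ → ℂ) (τ t x₁ x₂ : ℝ) (ξ : ℝ × ℝ) :
    ‖((2 * Real.pi * ξ.1 : ℝ) * Complex.I) * Phi a τ t x₁ x₂ ξ‖ =
      2 * Real.pi * |ξ.1| * ‖a τ ξ‖ := by
  rw [norm_mul, norm_Phi, norm_mul, Complex.norm_I, mul_one, Complex.norm_real, norm_mul,
    Real.norm_eq_abs ξ.1, Real.norm_of_nonneg (by positivity)]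

lemma U_eq_integral_Phi {a : ℝ → ℝ × ℝ → ℂ} {τ : ℝ} {φ : ℝ × ℝ → ℂ} (h : a τ = FT φ)
    (t x₁ x₂ : ℝ) : U (t - τ) φ (x₁, x₂) = ∫ ξ, Phi a τ t x₁ x₂ ξ := by
  rw [U, FTinv]
  congr 1; ext ξ
  rw [Phi, ← h, ← mul_assoc, ← Complex.exp_add]
  congr 2
  simp only [zk]
  push_cast
  ring

/-! ### Differentiating the Duhamel term -/

section
variable {a : ℝ → ℝ × ℝ → ℂ} {M : ℝ}

lemma integrable_decay (k : ℕ) (hk : 3 ≤ k) :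
    Integrable (fun ξ : ℝ × ℝ => ((1 + ‖ξ‖) ^ k)⁻¹) := by
  have h := integrable_one_add_norm (E := ℝ × ℝ) (μ := volume) (r := (k : ℝ)) (by
    simp; exact_mod_cast hk)
  refine h.congr (ae_of_all _ fun ξ => ?_)
  simp only
  rw [Real.rpow_neg (by positivity), Real.rpow_natCast]

lemma dPhi_bound (hM : ∀ τ ξ, ‖a τ ξ‖ ≤ M * ((1 + ‖ξ‖) ^ 4)⁻¹) (τ t x₁ x₂ : ℝ) (ξ : ℝ × ℝ) :
    ‖((2 * Real.pi * ξ.1 : ℝ) * Complex.I) * Phi a τ t x₁ x₂ ξ‖ ≤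
      2 * Real.pi * M * ((1 + ‖ξ‖) ^ 3)⁻¹ := by
  rw [norm_dPhi]
  have h1 : |ξ.1| ≤ 1 + ‖ξ‖ := by
    have := norm_fst_le ξ
    rw [Real.norm_eq_abs] at this
    linarith
  calc 2 * Real.pi * |ξ.1| * ‖a τ ξ‖
      ≤ 2 * Real.pi * (1 + ‖ξ‖) * (M * ((1 + ‖ξ‖) ^ 4)⁻¹) := by
        gcongr
        exact hM τ ξ
    _ = _ := by
        have : 1 + ‖ξ‖ ≠ 0 := by positivity
        field_simp

lemma continuous_Phi (ha : Continuous (Function.uncurry a)) :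
    Continuous (fun w : (ℝ × ℝ × ℝ × ℝ) × (ℝ × ℝ) => Phi a w.1.1 w.1.2.1 w.1.2.2.1 w.1.2.2.2 w.2) := by
  have h : Continuous (fun w : (ℝ × ℝ × ℝ × ℝ) × (ℝ × ℝ) => a w.1.1 w.2) :=
    ha.comp (continuous_fst.fst.prodMk continuous_snd)
  unfold Phi
  fun_prop

lemma continuous_Phi_xi (ha : Continuous (Function.uncurry a)) (τ t x₁ x₂ : ℝ) :
    Continuous (Phi a τ t x₁ x₂) :=
  (continuous_Phi ha).comp (f := fun ξ => ((τ, t, x₁, x₂), ξ)) (by fun_prop)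

lemma continuous_integral_Phi (ha : Continuous (Function.uncurry a))
    (hM : ∀ τ ξ, ‖a τ ξ‖ ≤ M * ((1 + ‖ξ‖) ^ 4)⁻¹) :
    Continuous (fun w : ℝ × ℝ × ℝ × ℝ => ∫ ξ, Phi a w.1 w.2.1 w.2.2.1 w.2.2.2 ξ) := by
  refine continuous_of_dominated (fun w => (continuous_Phi_xi ha _ _ _ _).aestronglyMeasurable)
    (fun w => ae_of_all _ fun ξ => ?_) ((integrable_decay 4 (by norm_num)).const_mul M)
    (ae_of_all _ fun ξ => (continuous_Phi ha).comp (f := fun w => (w, ξ)) (by fun_prop))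
  rw [norm_Phi]
  exact hM _ ξ

lemma continuous_dU (ha : Continuous (Function.uncurry a))
    (hM : ∀ τ ξ, ‖a τ ξ‖ ≤ M * ((1 + ‖ξ‖) ^ 4)⁻¹) :
    Continuous (fun w : ℝ × ℝ × ℝ × ℝ => dU a w.1 w.2.1 w.2.2.1 w.2.2.2) := by
  refine continuous_of_dominated (fun w => ?_)
    (fun w => ae_of_all _ fun ξ => dPhi_bound hM _ _ _ _ ξ)
    ((integrable_decay 3 le_rfl).const_mul (2 * Real.pi * M))
    (ae_of_all _ fun ξ => continuous_const.mul
      ((continuous_Phi ha).comp (f := fun w => (w, ξ)) (by fun_prop)))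
  have := continuous_Phi_xi ha w.1 w.2.1 w.2.2.1 w.2.2.2
  exact Continuous.aestronglyMeasurable (by fun_prop)

lemma hasDerivAt_integral_Phi (ha : Continuous (Function.uncurry a))
    (hM : ∀ τ ξ, ‖a τ ξ‖ ≤ M * ((1 + ‖ξ‖) ^ 4)⁻¹) (τ t x₁ x₂ : ℝ) :
    HasDerivAt (fun y => ∫ ξ, Phi a τ t y x₂ ξ) (dU a τ t x₁ x₂) x₁ := by
  refine (hasDerivAt_integral_of_dominated_loc_of_deriv_le
    (F := fun y ξ => Phi a τ t y x₂ ξ)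
    (F' := fun y ξ => ((2 * Real.pi * ξ.1 : ℝ) * Complex.I) * Phi a τ t y x₂ ξ)
    (bound := fun ξ => 2 * Real.pi * M * ((1 + ‖ξ‖) ^ 3)⁻¹) (s := Set.univ) Filter.univ_mem
    (Filter.Eventually.of_forall fun y => (continuous_Phi_xi ha _ _ _ _).aestronglyMeasurable)
    ?_ ?_ (ae_of_all _ fun ξ y _ => dPhi_bound hM _ _ _ _ ξ)
    ((integrable_decay 3 le_rfl).const_mul _) (ae_of_all _ fun ξ y _ => ?_)).2
  · refine Integrable.mono' ((integrable_decay 4 (by norm_num)).const_mul M)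
      (continuous_Phi_xi ha _ _ _ _).aestronglyMeasurable (ae_of_all _ fun ξ => ?_)
    rw [norm_Phi]
    exact hM _ ξ
  · have := continuous_Phi_xi ha τ t x₁ x₂
    exact Continuous.aestronglyMeasurable (by fun_prop)
  · have h1 : HasDerivAt (fun y : ℝ => 2 * Real.pi * (y * ξ.1 + x₂ * ξ.2) + (t - τ) * zk ξ)
        (2 * Real.pi * ξ.1) y := by
      simpa using ((((hasDerivAt_id y).mul_const ξ.1).add_const (x₂ * ξ.2)).const_mul
        (2 * Real.pi)).add_const ((t - τ) * zk ξ)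
    have h2 := ((h1.ofReal_comp.const_mul Complex.I).cexp).mul_const (a τ ξ)
    refine h2.congr_deriv ?_
    rw [Phi]
    ring

lemma hasDerivAt_duh (ha : Continuous (Function.uncurry a))
    (hM : ∀ τ ξ, ‖a τ ξ‖ ≤ M * ((1 + ‖ξ‖) ^ 4)⁻¹) (t x₁ x₂ : ℝ) :
    HasDerivAt (fun y => ∫ τ in (0 : ℝ)..t, ∫ ξ, Phi a τ t y x₂ ξ)
      (∫ τ in (0 : ℝ)..t, dU a τ t x₁ x₂) x₁ := by
  have hc : ∀ y, Continuous fun τ => ∫ ξ, Phi a τ t y x₂ ξ := fun y =>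
    (continuous_integral_Phi ha hM).comp (f := fun τ => (τ, t, y, x₂)) (by fun_prop)
  have hc' : Continuous fun τ => dU a τ t x₁ x₂ :=
    (continuous_dU ha hM).comp (f := fun τ => (τ, t, x₁, x₂)) (by fun_prop)
  refine (intervalIntegral.hasDerivAt_integral_of_dominated_loc_of_deriv_le
    (F := fun y τ => ∫ ξ, Phi a τ t y x₂ ξ) (F' := fun y τ => dU a τ t y x₂)
    (bound := fun _ => ∫ ξ : ℝ × ℝ, 2 * Real.pi * M * ((1 + ‖ξ‖) ^ 3)⁻¹)
    (s := Set.univ) Filter.univ_mem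
    (Filter.Eventually.of_forall fun y => (hc y).aestronglyMeasurable)
    ((hc x₁).intervalIntegrable _ _) hc'.aestronglyMeasurable
    (ae_of_all _ fun τ _ y _ => ?_) (by simp)
    (ae_of_all _ fun τ _ y _ => hasDerivAt_integral_Phi ha hM τ t y x₂)).2
  exact norm_integral_le_of_norm_le ((integrable_decay 3 le_rfl).const_mul _)
    (ae_of_all _ fun ξ => dPhi_bound hM _ _ _ _ ξ)

/-- Pointwise bound for `∂_{x₁}D(t)`. The cutoff `τ ≤ t` is dropped, which costs nothing since the
smoothing estimate `dU_L2_le` is global in time. -/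
lemma enorm_pd1_duh_le (ha : Continuous (Function.uncurry a))
    (hM : ∀ τ ξ, ‖a τ ξ‖ ≤ M * ((1 + ‖ξ‖) ^ 4)⁻¹) {T : ℝ}
    {g : ℝ → ℝ × ℝ → ℂ} (hag : ∀ τ ∈ Set.Icc 0 T, a τ = FT (g τ)) {t : ℝ}
    (ht : t ∈ Set.Icc 0 T) (x₁ x₂ : ℝ) :
    ‖pd1 (Duh g t) (x₁, x₂)‖ₑ ≤ ∫⁻ τ in Set.Icc 0 T, ‖dU a τ t x₁ x₂‖ₑ := by
  by_cases hdiff : DifferentiableAt ℝ (Duh g t) (x₁, x₂)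
  · have h1 : HasDerivAt (fun y : ℝ => (y, x₂)) ((1 : ℝ), (0 : ℝ)) x₁ :=
      (hasDerivAt_id x₁).prodMk (hasDerivAt_const x₁ x₂)
    have h2 : HasDerivAt (fun y => Duh g t (y, x₂)) (pd1 (Duh g t) (x₁, x₂)) x₁ :=
      HasFDerivAt.comp_hasDerivAt (l := Duh g t) x₁ hdiff.hasFDerivAt h1
    have h3 : (fun y => Duh g t (y, x₂)) =
        fun y => ∫ τ in (0 : ℝ)..t, ∫ ξ, Phi a τ t y x₂ ξ := by
      ext y
      rw [Duh]
      refine intervalIntegral.integral_congr fun τ hτ => ?_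
      rw [Set.uIcc_of_le ht.1] at hτ
      exact U_eq_integral_Phi (hag τ ⟨hτ.1, hτ.2.trans ht.2⟩) t y x₂
    rw [h3] at h2
    rw [h2.unique (hasDerivAt_duh ha hM t x₁ x₂), intervalIntegral.integral_of_le ht.1]
    refine (enorm_integral_le_lintegral_enorm _).trans (lintegral_mono_set ?_)
    exact fun τ hτ => ⟨hτ.1.le, hτ.2.trans ht.2⟩
  · -- Where `Duh g t` is not differentiable, `fderiv` is zero and the bound is trivial, so the
    -- differentiability of the Duhamel term in both variables is never needed.
    rw [pd1, fderiv_zero_of_not_differentiableAt hdiff]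
    simp

/-- Local smoothing for the linear group: at fixed `x₁`, one derivative in `x₁` is gained in
`L²_{x₂,t}`, because `∂_{ξ₁}(ξ₁(ξ₁²+ξ₂²)) = 3ξ₁² + ξ₂²` controls `|ξ₁|²`. -/
lemma dU_L2_le (ha : Continuous (Function.uncurry a))
    (hM : ∀ τ ξ, ‖a τ ξ‖ ≤ M * ((1 + ‖ξ‖) ^ 4)⁻¹) (τ x₁ : ℝ) :
    ∫⁻ z : ℝ × ℝ, ‖dU a τ z.2 x₁ z.1‖ₑ ^ (2 : ℝ) ≤
      ENNReal.ofReal (8 * Real.pi ^ 3) * ∫⁻ ξ, ‖a τ ξ‖ₑ ^ (2 : ℝ) := by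
  have hpi := Real.pi_pos
  have hac : Continuous (a τ) := ha.comp (f := fun ξ => (τ, ξ)) (by fun_prop)
  let f : ℝ × ℝ → ℂ := fun ξ => ((2 * Real.pi * ξ.1 : ℝ) * Complex.I) * Phi a τ 0 x₁ 0 ξ
  have hfc : Continuous f := by
    have := continuous_Phi_xi ha τ 0 x₁ 0
    simp only [f]; fun_prop
  have hfi : Integrable f := Integrable.mono' ((integrable_decay 3 le_rfl).const_mul _)
    hfc.aestronglyMeasurable (ae_of_all _ fun ξ => dPhi_bound hM _ _ _ _ ξ)
  have hdU : ∀ z : ℝ × ℝ, dU a τ z.2 x₁ z.1 = osc (fun b => 2 * Real.pi * b.2) zk f z := by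
    intro z
    rw [dU, osc]
    congr 1; ext ξ
    simp only [f, Phi]
    have : Complex.exp (Complex.I *
        ((2 * Real.pi * (x₁ * ξ.1 + z.1 * ξ.2) + (z.2 - τ) * zk ξ : ℝ) : ℂ)) =
        Complex.exp (Complex.I * ((z.1 * (2 * Real.pi * ξ.2) + z.2 * zk ξ : ℝ) : ℂ)) *
        Complex.exp (Complex.I *
          ((2 * Real.pi * (x₁ * ξ.1 + 0 * ξ.2) + (0 - τ) * zk ξ : ℝ) : ℂ)) := by
      rw [← Complex.exp_add]; push_cast; ring_nf
    rw [this]; ring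
  have h := osc_phase_le (q := zk) (q' := fun b => 3 * b.1 ^ 2 + b.2 ^ 2)
    (f := f) (H := fun b => 4 * Real.pi ^ 2 * ‖a τ b‖ ^ 2) (by fun_prop) (by fun_prop)
    (fun s x => by
      have := (hasDerivAt_id x).mul (((hasDerivAt_id x).pow 2).add_const (s ^ 2))
      refine this.congr_deriv ?_
      simp
      ring)
    (fun b => by positivity) hfc hfi (by fun_prop) (fun b => by positivity)
    (fun b => by
      rw [norm_dPhi, mul_pow, mul_pow, sq_abs]
      have : 0 ≤ 4 * Real.pi ^ 2 * ‖a τ b‖ ^ 2 := by positivity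
      nlinarith [sq_nonneg b.1, sq_nonneg b.2, mul_nonneg this (sq_nonneg b.1),
        mul_nonneg this (sq_nonneg b.2)])
  simp_rw [hdU]
  refine h.trans (le_of_eq ?_)
  rw [← lintegral_const_mul _ (by fun_prop), ← lintegral_const_mul _ (by fun_prop)]
  refine lintegral_congr fun b => ?_
  rw [← ENNReal.ofReal_mul (by positivity), ← ofReal_norm, ENNReal.rpow_two,
    ← ENNReal.ofReal_pow (norm_nonneg _), ← ENNReal.ofReal_mul (by positivity)]
  congr 1; ring

end

/-- `L^∞_{x₁} L²_{x₂ T}` smoothing estimate for `∂_{x₁}` of the Duhamel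
term by the `L¹_T L²_x` norm of the source. -/
theorem stmt7 :
    ∃ C : ℝ, 0 < C ∧ ∀ T : ℝ, 0 ≤ T → T ≤ 1 →
      ∀ g : ℝ → SchwartzMap (ℝ × ℝ) ℂ, ContinuousOn g (Set.Icc 0 T) →
        LinfX1L2Norm T (fun t => pd1 (Duh (fun τ => ⇑(g τ)) t))
          ≤ ENNReal.ofReal C * ∫⁻ τ in Set.Icc (0:ℝ) T, eLpNorm (⇑(g τ)) 2 volume := by
  have hpi := Real.pi_pos
  refine ⟨(8 * Real.pi ^ 3) ^ ((1 : ℝ) / 2), by positivity, fun T hT _ g hg => ?_⟩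
  obtain ⟨a, M, ha, hM, hag⟩ := family_bound hT g hg
  refine iSup_le fun x₁ => ?_
  have hdUc : Continuous (fun w : ℝ × ℝ × ℝ => dU a w.1 w.2.2 x₁ w.2.1) :=
    (continuous_dU ha hM).comp (f := fun w : ℝ × ℝ × ℝ => (w.1, w.2.2, x₁, w.2.1)) (by fun_prop)
  have hm : Measurable (Function.uncurry fun (τ : ℝ) (z : ℝ × ℝ) => ‖dU a τ z.2 x₁ z.1‖ₑ) :=
    hdUc.enorm.measurable
  have hm2 : Measurable (fun z : ℝ × ℝ =>
      (∫⁻ τ in Set.Icc (0 : ℝ) T, ‖dU a τ z.2 x₁ z.1‖ₑ) ^ (2 : ℝ)) :=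
    (hm.lintegral_prod_left').pow_const _
  calc _ ≤ (∫⁻ x₂ : ℝ, ∫⁻ t in Set.Icc (0 : ℝ) T,
        (∫⁻ τ in Set.Icc (0 : ℝ) T, ‖dU a τ t x₁ x₂‖ₑ) ^ (2 : ℝ)) ^ ((1 : ℝ) / 2) := by
        refine ENNReal.rpow_le_rpow (lintegral_mono fun x₂ => ?_) (by norm_num)
        refine setLIntegral_mono' measurableSet_Icc fun t ht => ?_
        gcongr
        exact enorm_pd1_duh_le ha hM hag ht x₁ x₂
    _ ≤ (∫⁻ x₂ : ℝ, ∫⁻ t : ℝ,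
        (∫⁻ τ in Set.Icc (0 : ℝ) T, ‖dU a τ t x₁ x₂‖ₑ) ^ (2 : ℝ)) ^ ((1 : ℝ) / 2) := by
        refine ENNReal.rpow_le_rpow (lintegral_mono fun x₂ => ?_) (by norm_num)
        exact setLIntegral_le_lintegral _ _
    _ = (∫⁻ z : ℝ × ℝ,
        (∫⁻ τ in Set.Icc (0 : ℝ) T, ‖dU a τ z.2 x₁ z.1‖ₑ) ^ (2 : ℝ)) ^ ((1 : ℝ) / 2) := by
        rw [Measure.volume_eq_prod, lintegral_prod _ hm2.aemeasurable]
    _ ≤ ∫⁻ τ in Set.Icc (0 : ℝ) T,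
        (∫⁻ z : ℝ × ℝ, ‖dU a τ z.2 x₁ z.1‖ₑ ^ (2 : ℝ)) ^ ((1 : ℝ) / 2) :=
        lintegral_L2_minkowski _ _ _ hm
    _ ≤ ∫⁻ τ in Set.Icc (0 : ℝ) T,
        ENNReal.ofReal ((8 * Real.pi ^ 3) ^ ((1 : ℝ) / 2)) * eLpNorm (⇑(g τ)) 2 volume := by
        refine setLIntegral_mono' measurableSet_Icc fun τ hτ => ?_
        rw [eLpNorm_eq_lintegral_rpow_enorm_toReal (by norm_num) (by norm_num),
          ← ENNReal.ofReal_rpow_of_pos (by positivity), ENNReal.toReal_ofNat,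
          ← ENNReal.mul_rpow_of_nonneg _ _ (by norm_num)]
        gcongr
        refine (dU_L2_le ha hM τ x₁).trans ?_
        rw [hag τ hτ]
        exact mul_le_mul_right (lintegral_FT_le (g τ)) _
    _ = _ := lintegral_const_mul' _ _ ENNReal.ofReal_ne_top
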